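/- (Main theorem) Suppose |A| = |N| = 3. Every normalized-cone-continuous, efficient, strategy-proof, and non-bossy rule φ : U^N → Π is ordinal: for any two profiles u, u' of no-ties Bernoulli utilities that induce the same profile of strict orders on A, φ(u) = φ(u'). -/

import Mathlib

/-! Fix the reports of all agents but one. Strategy-proofness and continuity make the lottery of
that agent the gradient of a convex value function, so it depends only on the order of the report
and on its rate of middle substitution `m ∈ (0, 1)`. As `m` grows, the probability of the middle
object is continuous and nondecreasing, and wherever it grows the other two fall strictly. Hence a
lottery that is not constant in `m` has full support for some `m` (`Good.const`), and it is enough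
to show that full support never occurs (`Good.not_full`).

Suppose agent `i` has full support. If `j` has the same order as `i`, then `j` gets none of the
common middle object (`Good.down`): otherwise efficiency puts the rate of `j` above that of `i`,
but the assignment stays put as the rate of `j` is lowered, so it could be brought below. If `j`
has another order, a swap shows that `j` lacks some object. So the supports of the others are
`x, y` and `y, z`, and each may be assumed to rank the object it does not get last
(`Good.push`). `Good.core` goes through the six orders of `i`: in four of them `Good.down`
applies at once. The two where `i` ranks `y` last are mirror images, handled by `Good.caseC`: one
of the other agents is moved across orders, comparing lotteries near ties with the help of
strategy-proofness, until it has the order of `i`. -/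

open Finset Filter Topology

/-- No ties on degenerate lotteries. -/
def NoTies (u : Fin 3 → ℝ) : Prop := ∀ x y : Fin 3, x ≠ y → u x ≠ u y

/-- A lottery over three objects. -/
def IsLottery (π : Fin 3 → ℝ) : Prop := (∀ x, 0 ≤ π x) ∧ ∑ x, π x = 1

/-- A 3×3 bistochastic matrix (rows = agents, columns = objects). -/
def Bistochastic (π : Fin 3 → Fin 3 → ℝ) : Prop :=
  (∀ i x, 0 ≤ π i x) ∧ (∀ i, ∑ x, π i x = 1) ∧ (∀ x, ∑ i, π i x = 1)

/-- Expected utility of lottery `π` under Bernoulli utility `u`. -/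
def EU (u π : Fin 3 → ℝ) : ℝ := ∑ x, u x * π x

/-- `u` and `v` induce the same strict order on objects. -/
def SameOrder (u v : Fin 3 → ℝ) : Prop := ∀ x y : Fin 3, u x > u y ↔ v x > v y

def NoTiesProfile (u : Fin 3 → Fin 3 → ℝ) : Prop := ∀ i, NoTies (u i)

/-- Utilities normalized to sum to one. -/
def Normalized (u : Fin 3 → ℝ) : Prop := ∑ x, u x = 1

/-- Rate of middle substitution, for `u a > u b > u c`. -/
noncomputable def mu (u : Fin 3 → ℝ) (a b c : Fin 3) : ℝ := (u b - u c) / (u a - u c)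

/-- Effectively the same: same strict order and same rate of middle substitution. -/
def EffSame (u v : Fin 3 → ℝ) : Prop :=
  SameOrder u v ∧ ∀ a b c : Fin 3, u a > u b → u b > u c → mu u a b c = mu v a b c

/-- The rule maps (no-ties) profiles to bistochastic matrices. -/
def BistochasticValued (φ : (Fin 3 → Fin 3 → ℝ) → Fin 3 → Fin 3 → ℝ) : Prop :=
  ∀ u, NoTiesProfile u → Bistochastic (φ u)

def StrategyProof (φ : (Fin 3 → Fin 3 → ℝ) → Fin 3 → Fin 3 → ℝ) : Prop :=
  ∀ u i ui', NoTiesProfile u → NoTies ui' →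
    EU (u i) (φ u i) ≥ EU (u i) (φ (Function.update u i ui') i)

def NonBossy (φ : (Fin 3 → Fin 3 → ℝ) → Fin 3 → Fin 3 → ℝ) : Prop :=
  ∀ u i ui', NoTiesProfile u → NoTies ui' →
    φ u i = φ (Function.update u i ui') i → φ u = φ (Function.update u i ui')

/-- `π'` Pareto-dominates `π` at `u` in expected utility. -/
def Dominates (u π' π : Fin 3 → Fin 3 → ℝ) : Prop :=
  (∀ j, EU (u j) (π' j) ≥ EU (u j) (π j)) ∧ ∃ i, EU (u i) (π' i) > EU (u i) (π i)

def Efficient (φ : (Fin 3 → Fin 3 → ℝ) → Fin 3 → Fin 3 → ℝ) : Prop :=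
  ∀ u, NoTiesProfile u → ¬ ∃ π', Bistochastic π' ∧ Dominates u π' (φ u)

/-- Normalized-cone-continuity. -/
def NCContinuous (φ : (Fin 3 → Fin 3 → ℝ) → Fin 3 → Fin 3 → ℝ) : Prop :=
  ∀ (u : Fin 3 → Fin 3 → ℝ) (i : Fin 3) (us : ℕ → Fin 3 → ℝ),
    NoTiesProfile u → Normalized (u i) →
    (∀ k, NoTies (us k) ∧ Normalized (us k)) →
    Tendsto us atTop (nhds (u i)) →
    Tendsto (fun k => φ (Function.update u i (us k))) atTop (nhds (φ u))

/-- The five standing assumptions on a rule, bundled. -/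
structure Good (φ : (Fin 3 → Fin 3 → ℝ) → Fin 3 → Fin 3 → ℝ) : Prop where
  hB : BistochasticValued φ
  hC : NCContinuous φ
  hE : Efficient φ
  hSP : StrategyProof φ
  hNB : NonBossy φ

/-- `x`, `y`, `z` are pairwise distinct, so they exhaust `Fin 3`. -/
def Tri (x y z : Fin 3) : Prop := x ≠ y ∧ x ≠ z ∧ y ≠ z

/-- A lottery with full support. -/
def Full (p : Fin 3 → ℝ) : Prop := ∀ x, 0 < p x

/-- The normalized representative of the utilities ranking `a` over `b` over `c` with rate of
middle substitution `m`: the vector `(1, m, 0)` shifted so that its coordinates sum to one. -/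
noncomputable def W (a b c : Fin 3) (m : ℝ) : Fin 3 → ℝ := fun x =>
  if x = a then 1 - m / 3 else if x = b then 2 * m / 3 else if x = c then -(m / 3) else 0

theorem sum3 {x y z : Fin 3} (h : Tri x y z) (f : Fin 3 → ℝ) : ∑ w, f w = f x + f y + f z := by
  obtain ⟨h1, h2, h3⟩ := h
  fin_cases x <;> fin_cases y <;> fin_cases z <;> simp_all [Fin.sum_univ_three] <;> ring

theorem Tri.cover {x y z : Fin 3} (h : Tri x y z) (w : Fin 3) : w = x ∨ w = y ∨ w = z := by
  obtain ⟨h1, h2, h3⟩ := h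
  revert x y z w; decide

theorem exists_third {x y : Fin 3} (h : x ≠ y) : ∃ z, Tri x y z := by
  unfold Tri; revert x y; decide

theorem W_a {a b c : Fin 3} (m : ℝ) : W a b c m a = 1 - m / 3 := by simp [W]

theorem W_b {a b c : Fin 3} (h : Tri a b c) (m : ℝ) : W a b c m b = 2 * m / 3 := by
  simp [W, h.1.symm]

theorem W_c {a b c : Fin 3} (h : Tri a b c) (m : ℝ) : W a b c m c = -(m / 3) := by
  simp [W, h.2.1.symm, h.2.2.symm]

theorem W_ab {a b c : Fin 3} (h : Tri a b c) {m : ℝ} (hm : m ∈ Set.Ioo (0 : ℝ) 1) :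
    W a b c m b < W a b c m a := by
  rw [W_a, W_b h]; linarith [hm.2]

theorem W_bc {a b c : Fin 3} (h : Tri a b c) {m : ℝ} (hm : m ∈ Set.Ioo (0 : ℝ) 1) :
    W a b c m c < W a b c m b := by
  rw [W_c h, W_b h]; linarith [hm.1]

theorem noTies_of_order {a b c : Fin 3} (h : Tri a b c) {v : Fin 3 → ℝ} (h1 : v b < v a)
    (h2 : v c < v b) : NoTies v := by
  intro x y hxy
  rcases h.cover x with rfl | rfl | rfl <;> rcases h.cover y with rfl | rfl | rfl <;>
    first | exact absurd rfl hxy | (intro h; linarith)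

theorem W_noTies {a b c : Fin 3} (h : Tri a b c) {m : ℝ} (hm : m ∈ Set.Ioo (0 : ℝ) 1) :
    NoTies (W a b c m) := noTies_of_order h (W_ab h hm) (W_bc h hm)

theorem W_norm {a b c : Fin 3} (h : Tri a b c) (m : ℝ) : Normalized (W a b c m) := by
  unfold Normalized
  rw [sum3 h, W_a, W_b h, W_c h]; ring

theorem mu_W {a b c : Fin 3} (h : Tri a b c) (m : ℝ) : mu (W a b c m) a b c = m := by
  unfold mu
  rw [W_a, W_b h, W_c h]; ring

theorem EU_W {a b c : Fin 3} (h : Tri a b c) (m : ℝ) {p : Fin 3 → ℝ} (hp : ∑ x, p x = 1) :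
    EU (W a b c m) p = p a + m * p b - m / 3 := by
  unfold EU
  rw [sum3 h] at hp
  rw [sum3 h, W_a, W_b h, W_c h]
  linear_combination (-m / 3) * hp

theorem upd_noTies {u : Fin 3 → Fin 3 → ℝ} (hu : NoTiesProfile u) (i : Fin 3) {v : Fin 3 → ℝ}
    (hv : NoTies v) : NoTiesProfile (Function.update u i v) := by
  intro j
  by_cases h : j = i
  · subst h; simpa using hv
  · simpa [Function.update_of_ne h] using hu j

theorem mu_mem {a b c : Fin 3} {v : Fin 3 → ℝ} (h1 : v b < v a) (h2 : v c < v b) :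
    mu v a b c ∈ Set.Ioo (0 : ℝ) 1 := by
  unfold mu
  constructor
  · apply div_pos <;> linarith
  · rw [div_lt_one (by linarith)]; linarith

section
variable {φ : (Fin 3 → Fin 3 → ℝ) → Fin 3 → Fin 3 → ℝ}

theorem Good.nn (h : Good φ) {u : Fin 3 → Fin 3 → ℝ} (hu : NoTiesProfile u) (i x : Fin 3) :
    0 ≤ φ u i x := (h.hB u hu).1 i x

theorem Good.row (h : Good φ) {u : Fin 3 → Fin 3 → ℝ} (hu : NoTiesProfile u) (i : Fin 3)
    {x y z : Fin 3} (t : Tri x y z) : φ u i x + φ u i y + φ u i z = 1 := by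
  rw [← sum3 t (φ u i)]; exact (h.hB u hu).2.1 i

theorem Good.col (h : Good φ) {u : Fin 3 → Fin 3 → ℝ} (hu : NoTiesProfile u) (x : Fin 3)
    {i j k : Fin 3} (t : Tri i j k) : φ u i x + φ u j x + φ u k x = 1 := by
  rw [← sum3 t (fun l => φ u l x)]; exact (h.hB u hu).2.2 x

/-! ### Consequences of efficiency: no profitable bilateral trade -/

/-- Agent `i` cannot profitably receive a multiple of `d` from agent `j`. -/
theorem Good.trade (h : Good φ) {u : Fin 3 → Fin 3 → ℝ} (hu : NoTiesProfile u) {i j : Fin 3}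
    (hij : i ≠ j) {d : Fin 3 → ℝ} (hd : ∑ x, d x = 0)
    (hi : ∀ x, d x < 0 → 0 < φ u i x) (hj : ∀ x, 0 < d x → 0 < φ u j x)
    (h1 : 0 < EU (u i) d) (h2 : EU (u j) d < 0) : False := by
  have key : ∀ᶠ ε : ℝ in 𝓝[>] 0, ∀ x, 0 ≤ φ u i x + ε * d x ∧ 0 ≤ φ u j x - ε * d x := by
    rw [eventually_all]
    intro x
    apply Filter.Eventually.and
    · rcases lt_or_ge (d x) 0 with hx | hx
      · have : Tendsto (fun ε : ℝ => φ u i x + ε * d x) (𝓝[>] 0) (𝓝 (φ u i x + 0 * d x)) :=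
          ((by fun_prop : Continuous fun ε : ℝ => φ u i x + ε * d x).tendsto 0).mono_left
            nhdsWithin_le_nhds
        rw [zero_mul, add_zero] at this
        filter_upwards [Tendsto.eventually_const_lt (hi x hx) this] with ε hε using hε.le
      · filter_upwards [self_mem_nhdsWithin] with ε hε
        have := h.nn hu i x
        have := mul_nonneg (le_of_lt hε) hx
        linarith
    · rcases lt_or_ge 0 (d x) with hx | hx
      · have : Tendsto (fun ε : ℝ => φ u j x - ε * d x) (𝓝[>] 0) (𝓝 (φ u j x - 0 * d x)) :=
          ((by fun_prop : Continuous fun ε : ℝ => φ u j x - ε * d x).tendsto 0).mono_left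
            nhdsWithin_le_nhds
        rw [zero_mul, sub_zero] at this
        filter_upwards [Tendsto.eventually_const_lt (hj x hx) this] with ε hε using hε.le
      · filter_upwards [self_mem_nhdsWithin] with ε hε
        have := h.nn hu j x
        have := mul_nonneg (le_of_lt hε) (neg_nonneg.2 hx)
        linarith
  obtain ⟨ε, hε, hpos⟩ := (key.and self_mem_nhdsWithin).exists
  have hpos : 0 < ε := hpos
  obtain ⟨k, hk⟩ := exists_third hij
  have hik := hk.2.1
  have hjk := hk.2.2
  let π : Fin 3 → Fin 3 → ℝ := fun l x =>
    if l = i then φ u i x + ε * d x else if l = j then φ u j x - ε * d x else φ u l x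
  have πi : π i = fun x => φ u i x + ε * d x := by simp [π]
  have πj : π j = fun x => φ u j x - ε * d x := by simp [π, hij.symm]
  have πk : π k = φ u k := by simp [π, hik.symm, hjk.symm]
  have EUi : EU (u i) (π i) = EU (u i) (φ u i) + ε * EU (u i) d := by
    simp only [EU, πi, Fin.sum_univ_three]; ring
  have EUj : EU (u j) (π j) = EU (u j) (φ u j) - ε * EU (u j) d := by
    simp only [EU, πj, Fin.sum_univ_three]; ring
  have hB := h.hB u hu
  refine h.hE u hu ⟨π, ⟨?_, ?_, ?_⟩, ?_, ?_⟩
  · intro l x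
    rcases hk.cover l with rfl | rfl | rfl
    · rw [πi]; exact (hε x).1
    · rw [πj]; exact (hε x).2
    · rw [πk]; exact h.nn hu _ x
  · intro l
    rcases hk.cover l with rfl | rfl | rfl
    · simp only [πi, Finset.sum_add_distrib, ← Finset.mul_sum, hd, hB.2.1]; ring
    · simp only [πj, Finset.sum_sub_distrib, ← Finset.mul_sum, hd, hB.2.1]; ring
    · simp only [πk, hB.2.1]
  · intro x
    rw [sum3 hk (fun l => π l x)]
    simp only [πi, πj, πk]
    linarith [h.col hu x hk]
  · intro l
    rcases hk.cover l with rfl | rfl | rfl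
    · rw [EUi]; nlinarith [mul_pos hpos h1]
    · rw [EUj]; nlinarith [mul_pos hpos (neg_pos.2 h2)]
    · rw [πk]
  · exact ⟨i, by rw [EUi]; nlinarith [mul_pos hpos h1]⟩

theorem Good.swap (h : Good φ) {u : Fin 3 → Fin 3 → ℝ} (hu : NoTiesProfile u) {i j : Fin 3}
    (hij : i ≠ j) {x y : Fin 3} (h1 : u i y < u i x) (h2 : u j x < u j y)
    (hi : 0 < φ u i y) (hj : 0 < φ u j x) : False := by
  have hxy : x ≠ y := by rintro rfl; linarith
  obtain ⟨z, t⟩ := exists_third hxy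
  refine h.trade hu hij (d := fun w => if w = x then 1 else if w = y then -1 else 0) ?_ ?_ ?_ ?_ ?_
  · rw [sum3 t]; simp [hxy.symm, t.2.1.symm, t.2.2.symm]
  · intro w hw
    rcases t.cover w with rfl | rfl | rfl
    · norm_num at hw
    · exact hi
    · simp [t.2.1.symm, t.2.2.symm] at hw
  · intro w hw
    rcases t.cover w with rfl | rfl | rfl
    · exact hj
    · simp [hxy.symm] at hw; linarith
    · simp [t.2.1.symm, t.2.2.symm] at hw
  · unfold EU; rw [sum3 t]; simp [hxy.symm, t.2.1.symm, t.2.2.symm]; linarith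
  · unfold EU; rw [sum3 t]; simp [hxy.symm, t.2.1.symm, t.2.2.symm]; linarith

/-- If `i` and `j` share the order `a, b, c` and `i` has the larger rate of middle substitution,
then `i` would buy `b` from `j`, paying with a suitable mixture of `a` and `c`. -/
theorem Good.mid (h : Good φ) {u : Fin 3 → Fin 3 → ℝ} (hu : NoTiesProfile u) {i j : Fin 3}
    (hij : i ≠ j) {a b c : Fin 3} (t : Tri a b c) (hi1 : u i b < u i a) (hi2 : u i c < u i b)
    (hj1 : u j b < u j a) (hj2 : u j c < u j b) (hm : mu (u j) a b c < mu (u i) a b c)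
    (ha : 0 < φ u i a) (hc : 0 < φ u i c) (hb : 0 < φ u j b) : False := by
  obtain ⟨s, hs1, hs2⟩ := exists_between hm
  have hs0 : 0 < s := lt_trans (mu_mem hj1 hj2).1 hs1
  have hs3 : s < 1 := lt_trans hs2 (mu_mem hi1 hi2).2
  unfold mu at hs1 hs2
  rw [div_lt_iff₀ (by linarith)] at hs1
  rw [lt_div_iff₀ (by linarith)] at hs2
  have hab := t.1
  have hac := t.2.1
  have hbc := t.2.2
  refine h.trade hu hij
    (d := fun w => if w = a then -s else if w = b then 1 else -(1 - s)) ?_ ?_ ?_ ?_ ?_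
  · rw [sum3 t]; simp [hab.symm, hac.symm, hbc.symm]
  · intro w hw
    rcases t.cover w with rfl | rfl | rfl
    · exact ha
    · simp [hab.symm] at hw; linarith
    · exact hc
  · intro w hw
    rcases t.cover w with rfl | rfl | rfl
    · simp at hw; linarith
    · exact hb
    · simp [hac.symm, hbc.symm] at hw; linarith
  · unfold EU; rw [sum3 t]; simp [hab.symm, hac.symm, hbc.symm]; nlinarith
  · unfold EU; rw [sum3 t]; simp [hab.symm, hac.symm, hbc.symm]; nlinarith

/-! ### Consequences of strategy-proofness and continuity for one agent -/

theorem Good.sp2 (h : Good φ) {u : Fin 3 → Fin 3 → ℝ} (hu : NoTiesProfile u) (i : Fin 3)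
    {v w : Fin 3 → ℝ} (hv : NoTies v) (hw : NoTies w) :
    EU v (φ (Function.update u i w) i) ≤ EU v (φ (Function.update u i v) i) := by
  have := h.hSP (Function.update u i v) i w (upd_noTies hu i hv) hw
  simpa using this

theorem Good.nb2 (h : Good φ) {u : Fin 3 → Fin 3 → ℝ} (hu : NoTiesProfile u) (i : Fin 3)
    {v w : Fin 3 → ℝ} (hv : NoTies v) (hw : NoTies w)
    (he : φ (Function.update u i v) i = φ (Function.update u i w) i) :
    φ (Function.update u i v) = φ (Function.update u i w) := by
  have := h.hNB (Function.update u i v) i w (upd_noTies hu i hv) hw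
  simp only [Function.update_idem] at this
  exact this he

/-- Cardinally equivalent reports are treated alike. The value function of a strategy-proof rule
is convex in the report and the assigned lottery is a subgradient of it; continuity makes that
subgradient unique, so it agrees with the lottery assigned to any equivalent report. -/
theorem Good.affine (h : Good φ) {u : Fin 3 → Fin 3 → ℝ} (hu : NoTiesProfile u) (i : Fin 3)
    {w v : Fin 3 → ℝ} (hw : NoTies w) (hwn : Normalized w) (hv : NoTies v) {s c : ℝ} (hs : 0 < s)
    (hvw : ∀ x, v x = s * w x + c) :
    φ (Function.update u i v) = φ (Function.update u i w) := by
  apply h.nb2 hu i hv hw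
  set q := φ (Function.update u i v) i with hq
  set p := φ (Function.update u i w) i with hp
  have hq1 : ∑ x, q x = 1 := (h.hB _ (upd_noTies hu i hv)).2.1 i
  have hp1 : ∑ x, p x = 1 := (h.hB _ (upd_noTies hu i hw)).2.1 i
  -- Perturb `w` in the direction `q - p`, which preserves normalization.
  let path : ℕ → Fin 3 → ℝ := fun k x => w x + (1 / ((k : ℝ) + 1)) * (q x - p x)
  have hpath : Tendsto path atTop (𝓝 w) := by
    rw [tendsto_pi_nhds]
    intro x
    have := (tendsto_one_div_add_atTop_nhds_zero_nat (𝕜 := ℝ)).mul_const (q x - p x)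
    have h2 := this.const_add (w x)
    rw [zero_mul, add_zero] at h2
    exact h2
  have hnt : ∀ᶠ k in atTop, NoTies (path k) := by
    have : ∀ᶠ k in atTop, ∀ x y, x ≠ y → path k x ≠ path k y := by
      rw [eventually_all]; intro x
      rw [eventually_all]; intro y
      by_cases hxy : x = y
      · simp [hxy]
      · have h1 := (tendsto_pi_nhds.1 hpath x).sub (tendsto_pi_nhds.1 hpath y)
        filter_upwards [h1.eventually_ne (sub_ne_zero.2 (hw x y hxy))] with k hk _
        exact sub_ne_zero.1 hk
    exact this
  obtain ⟨N, hN⟩ := eventually_atTop.1 hnt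
  let us : ℕ → Fin 3 → ℝ := fun k => path (k + N)
  have hus : ∀ k, NoTies (us k) ∧ Normalized (us k) := by
    intro k
    refine ⟨hN _ (by omega), ?_⟩
    unfold Normalized at hwn ⊢
    simp only [us, path, Finset.sum_add_distrib, ← Finset.mul_sum, Finset.sum_sub_distrib,
      hq1, hp1, hwn]
    ring
  have hlim : Tendsto us atTop (𝓝 ((Function.update u i w) i)) := by
    rw [Function.update_self]
    exact hpath.comp (tendsto_add_atTop_nat N)
  have hC := h.hC (Function.update u i w) i us (upd_noTies hu i hw) (by simpa using hwn) hus hlim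
  simp only [Function.update_idem] at hC
  have hCi : ∀ x, Tendsto (fun k => φ (Function.update u i (us k)) i x) atTop (𝓝 (p x)) :=
    fun x => tendsto_pi_nhds.1 (tendsto_pi_nhds.1 hC i) x
  have hineq : ∀ k, 0 ≤ ∑ x, (q x - p x) * (φ (Function.update u i (us k)) i x - q x) := by
    intro k
    have e1 := h.sp2 hu i (hus k).1 hv
    have e2 := h.sp2 hu i hw (hus k).1
    have e3 := h.sp2 hu i hv hw
    rw [← hq] at e1 e3
    rw [← hp] at e2 e3
    set r := φ (Function.update u i (us k)) i with hr
    have hpos : (0 : ℝ) < 1 / (((k + N : ℕ) : ℝ) + 1) := by positivity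
    have e4 : EU w p ≤ EU w q := by
      have f1 : ∀ g : Fin 3 → ℝ, ∑ x, g x = 1 → EU v g = s * EU w g + c := by
        intro g hg
        have hc : c = c * ∑ x, g x := by rw [hg, mul_one]
        rw [hc]
        simp only [EU, hvw, Fin.sum_univ_three]; ring
      rw [f1 p hp1, f1 q hq1] at e3
      exact le_of_mul_le_mul_left (by linarith) hs
    have f2 : ∀ g : Fin 3 → ℝ, EU (us k) g
        = EU w g + (1 / (((k + N : ℕ) : ℝ) + 1)) * ∑ x, (q x - p x) * g x := by
      intro g
      simp only [EU, us, path, Fin.sum_univ_three]; ring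
    rw [f2, f2] at e1
    have e5 := le_of_mul_le_mul_left (show (1 / (((k + N : ℕ) : ℝ) + 1)) * ∑ x, (q x - p x) * q x
      ≤ (1 / (((k + N : ℕ) : ℝ) + 1)) * ∑ x, (q x - p x) * r x by linarith) hpos
    simp only [mul_sub, Finset.sum_sub_distrib] at e5 ⊢
    linarith
  have hlim2 : Tendsto (fun k => ∑ x, (q x - p x) * (φ (Function.update u i (us k)) i x - q x))
      atTop (𝓝 (∑ x, (q x - p x) * (p x - q x))) :=
    tendsto_finsetSum _ fun x _ => ((hCi x).sub_const _).const_mul _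
  have h0 := ge_of_tendsto' hlim2 hineq
  have hz : ∑ x, (q x - p x) ^ 2 = 0 := by
    apply le_antisymm
    · have : ∑ x, (q x - p x) * (p x - q x) = - ∑ x, (q x - p x) ^ 2 := by
        rw [← Finset.sum_neg_distrib]; congr 1; ext x; ring
      linarith
    · positivity
  rw [Finset.sum_eq_zero_iff_of_nonneg (fun x _ => sq_nonneg _)] at hz
  ext x
  have := pow_eq_zero_iff (two_ne_zero) |>.1 (hz x (mem_univ x))
  linarith

/-- A report may be replaced by its normalized representative. -/
theorem Good.canon (h : Good φ) {u : Fin 3 → Fin 3 → ℝ} (hu : NoTiesProfile u) (i : Fin 3)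
    {a b c : Fin 3} (t : Tri a b c) (h1 : u i b < u i a) (h2 : u i c < u i b) :
    φ u = φ (Function.update u i (W a b c (mu (u i) a b c))) := by
  have hm := mu_mem h1 h2
  have := h.affine hu i (W_noTies t hm) (W_norm t _) (hu i) (s := u i a - u i c)
    (c := u i c + (u i b - u i c) / 3) (by linarith) ?_
  · rw [← this, Function.update_eq_self]
  · intro x
    have hne : u i a - u i c ≠ 0 := by linarith
    rcases t.cover x with rfl | rfl | rfl
    · rw [W_a, mu]; field_simp; ring
    · rw [W_b t, mu]; field_simp; ring
    · rw [W_c t, mu]; field_simp; ring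

theorem Good.cont (h : Good φ) {u : Fin 3 → Fin 3 → ℝ} (hu : NoTiesProfile u) (i : Fin 3)
    {a b c : Fin 3} (t : Tri a b c) :
    ContinuousOn (fun m => φ (Function.update u i (W a b c m))) (Set.Ioo 0 1) := by
  intro m hm
  rw [ContinuousWithinAt, tendsto_iff_seq_tendsto]
  intro ms hms
  rw [tendsto_nhdsWithin_iff] at hms
  obtain ⟨hms, hev⟩ := hms
  obtain ⟨N, hN⟩ := eventually_atTop.1 hev
  rw [← tendsto_add_atTop_iff_nat N]
  have hcW : Continuous (fun m => W a b c m) := by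
    rw [continuous_pi_iff]
    intro x
    rcases t.cover x with rfl | rfl | rfl
    · simp only [W_a]; fun_prop
    · simp only [W_b t]; fun_prop
    · simp only [W_c t]; fun_prop
  have := h.hC (Function.update u i (W a b c m)) i (fun k => W a b c (ms (k + N)))
    (upd_noTies hu i (W_noTies t hm)) (by simpa using W_norm t m)
    (fun k => ⟨W_noTies t (hN _ (by omega)), W_norm t _⟩)
    (by
      rw [Function.update_self]
      exact (hcW.tendsto m).comp (hms.comp (tendsto_add_atTop_nat N)))
  simp only [Function.update_idem] at this
  exact this

theorem Good.sp1 (h : Good φ) {u : Fin 3 → Fin 3 → ℝ} (hu : NoTiesProfile u) (i : Fin 3)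
    {a b c : Fin 3} (t : Tri a b c) {m : ℝ} (hm : m ∈ Set.Ioo (0 : ℝ) 1) {v : Fin 3 → ℝ}
    (hv : NoTies v) :
    φ (Function.update u i v) i a + m * φ (Function.update u i v) i b
      ≤ φ (Function.update u i (W a b c m)) i a + m * φ (Function.update u i (W a b c m)) i b := by
  have := h.sp2 hu i (W_noTies t hm) hv
  rw [EU_W t m ((h.hB _ (upd_noTies hu i hv)).2.1 i),
    EU_W t m ((h.hB _ (upd_noTies hu i (W_noTies t hm))).2.1 i)] at this
  linarith

/-- As the rate of middle substitution rises, the probability of the middle object rises; if it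
rises strictly, the other two probabilities fall strictly. If it stays the same, so does the whole
assignment. -/
theorem Good.mono (h : Good φ) {u : Fin 3 → Fin 3 → ℝ} (hu : NoTiesProfile u) (i : Fin 3)
    {a b c : Fin 3} (t : Tri a b c) {m m' : ℝ} (hm : m ∈ Set.Ioo (0 : ℝ) 1)
    (hm' : m' ∈ Set.Ioo (0 : ℝ) 1) (hlt : m < m') :
    φ (Function.update u i (W a b c m)) = φ (Function.update u i (W a b c m')) ∨
    (φ (Function.update u i (W a b c m)) i b < φ (Function.update u i (W a b c m')) i b ∧
     φ (Function.update u i (W a b c m')) i a < φ (Function.update u i (W a b c m)) i a ∧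
     φ (Function.update u i (W a b c m')) i c < φ (Function.update u i (W a b c m)) i c) := by
  have e1 := h.sp1 hu i t hm (W_noTies t hm')
  have e2 := h.sp1 hu i t hm' (W_noTies t hm)
  have r1 := h.row (upd_noTies hu i (W_noTies t hm)) i t
  have r2 := h.row (upd_noTies hu i (W_noTies t hm')) i t
  have key := h.nb2 hu i (W_noTies t hm) (W_noTies t hm')
  set p := φ (Function.update u i (W a b c m)) i
  set p' := φ (Function.update u i (W a b c m')) i
  have hb : p b ≤ p' b := by
    by_contra hcon
    push Not at hcon
    nlinarith [mul_pos (sub_pos.2 hlt) (sub_pos.2 hcon)]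
  rcases hb.eq_or_lt with hb | hb
  · left
    apply key
    have ha : p a = p' a := by rw [hb] at e1 e2; linarith
    ext x
    rcases t.cover x with rfl | rfl | rfl <;> linarith
  · right
    refine ⟨hb, ?_, ?_⟩
    · nlinarith [mul_pos hm.1 (sub_pos.2 hb)]
    · nlinarith [mul_pos (sub_pos.2 hm'.2) (sub_pos.2 hb)]

/-- A lottery that moves with the report must, by the intermediate value theorem, pass through
lotteries of full support. -/
theorem Good.const (h : Good φ) {u : Fin 3 → Fin 3 → ℝ} (hu : NoTiesProfile u) (i : Fin 3)
    {a b c : Fin 3} (t : Tri a b c)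
    (hf : ∀ m ∈ Set.Ioo (0 : ℝ) 1, ¬ Full (φ (Function.update u i (W a b c m)) i))
    {m m' : ℝ} (hm : m ∈ Set.Ioo (0 : ℝ) 1) (hm' : m' ∈ Set.Ioo (0 : ℝ) 1) :
    φ (Function.update u i (W a b c m)) = φ (Function.update u i (W a b c m')) := by
  wlog hlt : m < m' generalizing m m'
  · rcases (not_lt.1 hlt).eq_or_lt with he | he
    · rw [he]
    · exact (this hm' hm he).symm
  rcases h.mono hu i t hm hm' hlt with he | ⟨hb, -, -⟩
  · exact he
  exfalso
  have hsub : Set.Icc m m' ⊆ Set.Ioo (0 : ℝ) 1 := fun s hs =>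
    ⟨lt_of_lt_of_le hm.1 hs.1, lt_of_le_of_lt hs.2 hm'.2⟩
  have hc : ContinuousOn (fun s => φ (Function.update u i (W a b c s)) i b) (Set.Icc m m') :=
    (continuous_apply_apply i b).comp_continuousOn ((h.cont hu i t).mono hsub)
  obtain ⟨s, hs, hse⟩ := intermediate_value_Ioo hlt.le hc
    (show (φ (Function.update u i (W a b c m)) i b + φ (Function.update u i (W a b c m')) i b) / 2
      ∈ Set.Ioo _ _ by constructor <;> linarith)
  have hs0 := hsub ⟨hs.1.le, hs.2.le⟩
  simp only at hse
  refine hf s hs0 fun x => ?_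
  rcases h.mono hu i t hm hs0 hs.1 with he1 | ⟨h1, -, -⟩
  · rw [he1] at hb hse; linarith
  rcases h.mono hu i t hs0 hm' hs.2 with he1 | ⟨-, h2, h3⟩
  · rw [← he1] at hb hse; linarith
  rcases t.cover x with rfl | rfl | rfl
  · exact lt_of_le_of_lt (h.nn (upd_noTies hu i (W_noTies t hm')) _ _) h2
  · exact lt_of_le_of_lt (h.nn (upd_noTies hu i (W_noTies t hm)) _ _) h1
  · exact lt_of_le_of_lt (h.nn (upd_noTies hu i (W_noTies t hm')) _ _) h3

/-- Two reports that nearly tie `b` and `c` at the bottom give nearly the same value, hence the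
same probability of the top object. -/
theorem Good.cross_le (h : Good φ) {u : Fin 3 → Fin 3 → ℝ} (hu : NoTiesProfile u) (i : Fin 3)
    {a b c : Fin 3} (t : Tri a b c) {p p' : Fin 3 → ℝ}
    (hp : ∀ m ∈ Set.Ioo (0 : ℝ) 1, φ (Function.update u i (W a b c m)) i = p)
    (hp' : ∀ m ∈ Set.Ioo (0 : ℝ) 1, φ (Function.update u i (W a c b m)) i = p') :
    p' a ≤ p a := by
  have t' : Tri a c b := ⟨t.2.1, t.1, t.2.2.symm⟩
  have half : (1 / 2 : ℝ) ∈ Set.Ioo (0 : ℝ) 1 := by norm_num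
  by_contra hcon
  push Not at hcon
  have r := h.row (upd_noTies hu i (W_noTies t half)) i t
  have n1 := h.nn (upd_noTies hu i (W_noTies t half)) i
  have n2 := h.nn (upd_noTies hu i (W_noTies t' half)) i
  have r' := h.row (upd_noTies hu i (W_noTies t' half)) i t
  rw [hp _ half] at r n1
  rw [hp' _ half] at n2 r'
  have hm : (p' a - p a) / 2 ∈ Set.Ioo (0 : ℝ) 1 := by
    constructor <;> linarith [n1 a, n2 b, n2 c]
  have e := h.sp1 hu i t hm (W_noTies t' half)
  rw [hp _ hm, hp' _ half] at e
  have : p b ≤ 1 := by linarith [n1 a, n1 c]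
  nlinarith [mul_le_mul_of_nonneg_left this hm.1.le, mul_nonneg hm.1.le (n2 b)]

theorem Good.cross_bot (h : Good φ) {u : Fin 3 → Fin 3 → ℝ} (hu : NoTiesProfile u) (i : Fin 3)
    {a b c : Fin 3} (t : Tri a b c) {p p' : Fin 3 → ℝ}
    (hp : ∀ m ∈ Set.Ioo (0 : ℝ) 1, φ (Function.update u i (W a b c m)) i = p)
    (hp' : ∀ m ∈ Set.Ioo (0 : ℝ) 1, φ (Function.update u i (W a c b m)) i = p') :
    p a = p' a :=
  le_antisymm (h.cross_le hu i ⟨t.2.1, t.1, t.2.2.symm⟩ hp' hp) (h.cross_le hu i t hp hp')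

/-- The analogue of `Good.cross_le` for a near tie of `a` and `b` at the top. -/
theorem Good.cross_top_le (h : Good φ) {u : Fin 3 → Fin 3 → ℝ} (hu : NoTiesProfile u) (i : Fin 3)
    {a b c : Fin 3} (t : Tri a b c) {p p' : Fin 3 → ℝ}
    (hp : ∀ m ∈ Set.Ioo (0 : ℝ) 1, φ (Function.update u i (W a b c m)) i = p)
    (hp' : ∀ m ∈ Set.Ioo (0 : ℝ) 1, φ (Function.update u i (W b a c m)) i = p') :
    p c ≤ p' c := by
  have t' : Tri b a c := ⟨t.1.symm, t.2.2, t.2.1⟩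
  have half : (1 / 2 : ℝ) ∈ Set.Ioo (0 : ℝ) 1 := by norm_num
  by_contra hcon
  push Not at hcon
  have r := h.row (upd_noTies hu i (W_noTies t half)) i t
  have n1 := h.nn (upd_noTies hu i (W_noTies t half)) i
  have n2 := h.nn (upd_noTies hu i (W_noTies t' half)) i
  have r' := h.row (upd_noTies hu i (W_noTies t' half)) i t
  rw [hp _ half] at r n1
  rw [hp' _ half] at n2 r'
  have hm : 1 - (p c - p' c) / 2 ∈ Set.Ioo (0 : ℝ) 1 := by
    constructor <;> linarith [n1 a, n1 b, n2 c]
  have e := h.sp1 hu i t hm (W_noTies t' half)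
  rw [hp _ hm, hp' _ half] at e
  have : p' b ≤ 1 := by linarith [n2 a, n2 c]
  nlinarith [mul_nonneg (sub_pos.2 hm.2).le (n1 b),
    mul_le_mul_of_nonneg_left this (sub_pos.2 hm.2).le]

theorem Good.cross_top (h : Good φ) {u : Fin 3 → Fin 3 → ℝ} (hu : NoTiesProfile u) (i : Fin 3)
    {a b c : Fin 3} (t : Tri a b c) {p p' : Fin 3 → ℝ}
    (hp : ∀ m ∈ Set.Ioo (0 : ℝ) 1, φ (Function.update u i (W a b c m)) i = p)
    (hp' : ∀ m ∈ Set.Ioo (0 : ℝ) 1, φ (Function.update u i (W b a c m)) i = p') :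
    p c = p' c :=
  le_antisymm (h.cross_top_le hu i t hp hp')
    (h.cross_top_le hu i ⟨t.1.symm, t.2.2, t.2.1⟩ hp' hp)

/-- Worsening an object which the agent receives with probability zero changes nothing. -/
theorem Good.push (h : Good φ) {u : Fin 3 → Fin 3 → ℝ} (hu : NoTiesProfile u) (i : Fin 3)
    {x y z : Fin 3} (t : Tri x y z) (hz : φ u i z = 0) {v : Fin 3 → ℝ} (hv : NoTies v)
    (hx : v x = u i x) (hy : v y = u i y) (hlt : v z < u i z) :
    φ (Function.update u i v) = φ u := by
  have hv' := upd_noTies hu i hv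
  symm
  apply h.hNB u i v hu hv
  have e1 := h.hSP u i v hu hv
  have e2 := h.hSP (Function.update u i v) i (u i) hv' (hu i)
  simp only [Function.update_idem, Function.update_eq_self, Function.update_self] at e2
  have r1 := h.row hu i t
  have r2 := h.row hv' i t
  have n := h.nn hv' i z
  set p := φ u i
  set q := φ (Function.update u i v) i
  unfold EU at e1 e2
  rw [sum3 t, sum3 t] at e1 e2
  rw [hx, hy] at e2
  rw [hz] at e1 e2 r1
  have hq : q z = 0 := by
    apply le_antisymm _ n
    by_contra hcon
    push Not at hcon
    nlinarith [mul_pos (sub_pos.2 hlt) hcon]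
  rw [hq] at e1 e2 r2
  have hne : u i x - u i y ≠ 0 := sub_ne_zero.2 (hu i x y t.1)
  have : (u i x - u i y) * (p x - q x) = 0 := by
    have a1 : p y = 1 - p x := by linarith
    have a2 : q y = 1 - q x := by linarith
    rw [a1, a2] at e1 e2
    linarith
  have hpx : p x = q x := by
    rcases mul_eq_zero.1 this with h0 | h0
    · exact absurd h0 hne
    · linarith
  ext w
  rcases t.cover w with rfl | rfl | rfl <;> linarith

/-! ### No agent ever receives a lottery of full support -/

/-- Crossing argument for two agents `i`, `j` with common order `a, b, c`: when `i` has full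
support and `j` holds some `b`, efficiency forces the rate of `j` to be at least that of `i`.
Lowering the rate of `j` cannot change the assignment, because `j` cannot have full support too,
and so eventually brings it below the rate of `i`. -/
theorem Good.down (h : Good φ) {u : Fin 3 → Fin 3 → ℝ} (hu : NoTiesProfile u) {i j : Fin 3}
    (hij : i ≠ j) {a b c : Fin 3} (t : Tri a b c) (hi1 : u i b < u i a) (hi2 : u i c < u i b)
    (hj1 : u j b < u j a) (hj2 : u j c < u j b) (hf : Full (φ u i)) : φ u j b = 0 := by
  by_contra hb0
  have hb : 0 < φ u j b := lt_of_le_of_ne (h.nn hu j b) (Ne.symm hb0)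
  set F : ℝ → Fin 3 → Fin 3 → ℝ := fun m => φ (Function.update u j (W a b c m)) with hF
  have hF0 : φ u = F (mu (u j) a b c) := h.canon hu j t hj1 hj2
  have hm0 := mu_mem hj1 hj2
  have hmi := mu_mem hi1 hi2
  have hcan : ∀ m ∈ Set.Ioo (0 : ℝ) 1, NoTiesProfile (Function.update u j (W a b c m)) :=
    fun m hm => upd_noTies hu j (W_noTies t hm)
  have low : ∀ m ∈ Set.Ioo (0 : ℝ) 1, Full (F m i) → 0 < F m j b → mu (u i) a b c ≤ m := by
    intro m hm hfull hbm
    by_contra hcon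
    push Not at hcon
    refine h.mid (hcan m hm) hij t ?_ ?_ ?_ ?_ ?_ (hfull a) (hfull c) hbm
    · simpa [Function.update_of_ne hij] using hi1
    · simpa [Function.update_of_ne hij] using hi2
    · simpa using W_ab t hm
    · simpa using W_bc t hm
    · simpa [Function.update_of_ne hij, mu_W t] using hcon
  have high : ∀ m ∈ Set.Ioo (0 : ℝ) 1, Full (F m i) → mu (u i) a b c < m → ¬ Full (F m j) := by
    intro m hm hfull hlt hfj
    refine h.mid (hcan m hm) hij.symm t ?_ ?_ ?_ ?_ ?_ (hfj a) (hfj c) (hfull b)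
    · simpa using W_ab t hm
    · simpa using W_bc t hm
    · simpa [Function.update_of_ne hij] using hi1
    · simpa [Function.update_of_ne hij] using hi2
    · simpa [Function.update_of_ne hij, mu_W t] using hlt
  let T : Set ℝ := {m | m ∈ Set.Ioo (0 : ℝ) 1 ∧ F m = φ u}
  have hTne : T.Nonempty := ⟨_, hm0, hF0.symm⟩
  have hTlow : ∀ m ∈ T, mu (u i) a b c ≤ m := fun m hm =>
    low m hm.1 (by rw [hm.2]; exact hf) (by rw [hm.2]; exact hb)
  have hTb : BddBelow T := ⟨_, hTlow⟩
  set s := sInf T with hs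
  have hs1 : mu (u i) a b c ≤ s := le_csInf hTne hTlow
  have hs2 : s ≤ mu (u j) a b c := csInf_le hTb ⟨hm0, hF0.symm⟩
  have hs0 : s ∈ Set.Ioo (0 : ℝ) 1 := ⟨lt_of_lt_of_le hmi.1 hs1, lt_of_le_of_lt hs2 hm0.2⟩
  have hcs : ContinuousAt F s := (h.cont hu j t).continuousAt (Ioo_mem_nhds hs0.1 hs0.2)
  have hFs : F s = φ u := by
    obtain ⟨ms, -, hms, hmT⟩ := exists_seq_tendsto_sInf hTne hTb
    have h1 : Tendsto (fun n => F (ms n)) atTop (𝓝 (F s)) := hcs.tendsto.comp hms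
    have h2 : (fun n => F (ms n)) = fun _ => φ u := funext fun n => (hmT n).2
    rw [h2] at h1
    exact tendsto_nhds_unique h1 tendsto_const_nhds
  have hent : ∀ k x, Tendsto (fun m => F m k x) (𝓝 s) (𝓝 (φ u k x)) := by
    intro k x
    rw [← hFs]
    exact tendsto_pi_nhds.1 (tendsto_pi_nhds.1 hcs k) x
  have ev : ∀ᶠ m in 𝓝[<] s, m ∈ Set.Ioo (0 : ℝ) 1 ∧ Full (F m i) ∧ 0 < F m j b := by
    apply nhdsWithin_le_nhds
    have hI : ∀ᶠ m in 𝓝 s, m ∈ Set.Ioo (0 : ℝ) 1 := Ioo_mem_nhds hs0.1 hs0.2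
    refine hI.and (Filter.Eventually.and ?_ ((hent j b).eventually_const_lt hb))
    exact eventually_all.2 fun x => (hent i x).eventually_const_lt (hf x)
  have ev2 : ∀ᶠ m in 𝓝[<] s, m ≠ mu (u i) a b c := by
    rcases hs1.eq_or_lt with he | hl
    · filter_upwards [self_mem_nhdsWithin] with m hm
      rw [he]; exact ne_of_lt hm
    · apply nhdsWithin_le_nhds
      exact isOpen_ne.mem_nhds (ne_of_gt hl)
  obtain ⟨m, ⟨⟨hm, hfull, hbm⟩, hne⟩, hlt⟩ := ((ev.and ev2).and self_mem_nhdsWithin).exists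
  have hlt : m < s := hlt
  have hmlow := lt_of_le_of_ne (low m hm hfull hbm) (Ne.symm hne)
  rcases h.mono hu j t hm hs0 hlt with he | ⟨-, h2, h3⟩
  · have : m ∈ T := ⟨hm, by rw [← hFs]; exact he⟩
    exact absurd (csInf_le hTb this) (not_le.2 hlt)
  · refine high m hm hfull hmlow fun x => ?_
    rcases t.cover x with rfl | rfl | rfl
    · exact lt_of_le_of_lt (h.nn (hcan s hs0) j _) h2
    · exact hbm
    · exact lt_of_le_of_lt (h.nn (hcan s hs0) j _) h3

theorem Good.not_pos (h : Good φ) {u : Fin 3 → Fin 3 → ℝ} (hu : NoTiesProfile u) {i x : Fin 3}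
    (hn : ¬ 0 < φ u i x) : φ u i x = 0 := le_antisymm (not_lt.1 hn) (h.nn hu i x)

/-- The one configuration not excluded by `Good.down` directly. Moving `k` from the order
`z, y, x` to `z, x, y` leaves the assignment unchanged. Once `k` moves on to the order `x, z, y`
of `i`, either the assignment is still the same, against `Good.down`, or `k` holds `x` and `y`
while `i` holds all of `z`, which is inefficient for high rates of `k`. -/
theorem Good.caseC (h : Good φ) {u : Fin 3 → Fin 3 → ℝ} (hu : NoTiesProfile u) {i j k : Fin 3}
    (T : Tri i j k) {x y z : Fin 3} (t : Tri x y z) (hi1 : u i z < u i x) (hi2 : u i y < u i z)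
    (hj1 : u j y < u j x) (hj2 : u j z < u j y) (hk1 : u k y < u k z) (hk2 : u k x < u k y)
    (hf : Full (φ u i)) (hjz : φ u j z = 0) (hkx : φ u k x = 0) : False := by
  have hik := T.2.1
  have hjk := T.2.2
  have t1 : Tri z y x := ⟨t.2.2.symm, t.2.1.symm, t.1.symm⟩
  have t2 : Tri z x y := ⟨t.2.1.symm, t.2.2.symm, t.1⟩
  have t3 : Tri x z y := ⟨t.2.1, t.1, t.2.2.symm⟩
  have half : (1 / 2 : ℝ) ∈ Set.Ioo (0 : ℝ) 1 := by norm_num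
  have ui : ∀ v, Function.update u k v i = u i := fun v => Function.update_of_ne hik v u
  have uj : ∀ v, Function.update u k v j = u j := fun v => Function.update_of_ne hjk v u
  have uk : ∀ v, Function.update u k v k = v := fun v => Function.update_self k v u
  have n1 : ∀ m ∈ Set.Ioo (0 : ℝ) 1, ¬ Full (φ (Function.update u k (W z y x m)) k) := by
    intro m hm hfk
    have hu' := upd_noTies hu k (W_noTies t1 hm)
    have a1 : φ (Function.update u k (W z y x m)) i z = 0 := h.not_pos hu' fun hp =>
      h.swap hu' hik (x := x) (y := z) (by rwa [ui])
        (by rw [uk]; exact (W_bc t1 hm).trans (W_ab t1 hm)) hp (hfk x)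
    have a2 : φ (Function.update u k (W z y x m)) j z = 0 := h.not_pos hu' fun hp =>
      h.swap hu' hjk (x := x) (y := z) (by rw [uj]; linarith)
        (by rw [uk]; exact (W_bc t1 hm).trans (W_ab t1 hm)) hp (hfk x)
    have c := h.col hu' z T
    have r := h.row hu' k t
    linarith [hfk x, hfk y]
  -- With order `z, x, y`, holding any `x` would make `k` hold all of `z`.
  have x0 : ∀ m ∈ Set.Ioo (0 : ℝ) 1, φ (Function.update u k (W z x y m)) k x = 0 := by
    intro m hm
    have hu' := upd_noTies hu k (W_noTies t2 hm)
    apply h.not_pos hu'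
    intro hpx
    have a1 : φ (Function.update u k (W z x y m)) i z = 0 := h.not_pos hu' fun hp =>
      h.swap hu' hik (x := x) (y := z) (by rwa [ui]) (by rw [uk]; exact W_ab t2 hm) hp hpx
    have a2 : φ (Function.update u k (W z x y m)) j z = 0 := h.not_pos hu' fun hp =>
      h.swap hu' hjk (x := x) (y := z) (by rw [uj]; linarith) (by rw [uk]; exact W_ab t2 hm) hp hpx
    have c := h.col hu' z T
    have r := h.row hu' k t
    linarith [h.nn hu' k y]
  have n2 : ∀ m ∈ Set.Ioo (0 : ℝ) 1, ¬ Full (φ (Function.update u k (W z x y m)) k) :=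
    fun m hm hfk => (hfk x).ne' (x0 m hm)
  have n3 : ∀ m ∈ Set.Ioo (0 : ℝ) 1, ¬ Full (φ (Function.update u k (W x z y m)) k) := by
    intro m hm hfk
    have hu' := upd_noTies hu k (W_noTies t3 hm)
    have a1 : φ (Function.update u k (W x z y m)) i z = 0 :=
      h.down hu' hik.symm t3 (by rw [uk]; exact W_ab t3 hm) (by rw [uk]; exact W_bc t3 hm)
        (by rwa [ui]) (by rwa [ui]) hfk
    have a2 : φ (Function.update u k (W x z y m)) j z = 0 := h.not_pos hu' fun hp =>
      h.swap hu' hjk (x := y) (y := z) (by rwa [uj]) (by rw [uk]; exact W_bc t3 hm) hp (hfk y)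
    have c := h.col hu' z T
    have r := h.row hu' k t
    linarith [hfk x, hfk y]
  have E1 : φ u = φ (Function.update u k (W z y x (1 / 2))) := by
    rw [h.canon hu k t1 hk1 hk2]
    exact h.const hu k t1 n1 (mu_mem hk1 hk2) half
  have b1 : φ (Function.update u k (W z y x (1 / 2))) k z
      = φ (Function.update u k (W z x y (1 / 2))) k z :=
    h.cross_bot hu k t1 (fun m hm => congrFun (h.const hu k t1 n1 hm half) k)
      (fun m hm => congrFun (h.const hu k t2 n2 hm half) k)
  have hu2 := upd_noTies hu k (W_noTies t2 half)
  have hu3 := upd_noTies hu k (W_noTies t3 half)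
  have R0 := h.row hu k t
  have R2 := h.row hu2 k t
  have R3 := h.row hu3 k t
  have X2 := x0 _ half
  have E2 : φ (Function.update u k (W z y x (1 / 2)))
      = φ (Function.update u k (W z x y (1 / 2))) := by
    apply h.nb2 hu k (W_noTies t1 half) (W_noTies t2 half)
    rw [← E1] at b1 ⊢
    ext w
    rcases t.cover w with rfl | rfl | rfl <;> linarith
  have b2 : φ (Function.update u k (W z x y (1 / 2))) k y
      = φ (Function.update u k (W x z y (1 / 2))) k y :=
    h.cross_top hu k t2 (fun m hm => congrFun (h.const hu k t2 n2 hm half) k)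
      (fun m hm => congrFun (h.const hu k t3 n3 hm half) k)
  rw [← E2, ← E1] at b2
  -- Both coordinates `y` and `z` of the lottery of `k` at `u` are positive.
  have C0x := h.col hu x T
  have C0z := h.col hu z T
  have R0i := h.row hu i t
  have R0j := h.row hu j t
  have hkz : 0 < φ u k z := by linarith [hf x, hf y]
  have C0y := h.col hu y T
  have hky : 0 < φ u k y := by linarith [hf z]
  by_cases hz3 : 0 < φ (Function.update u k (W x z y (1 / 2))) k z
  -- If `k` still holds `z`, its lottery on `y, z` and hence the assignment are unchanged.
  · have hx3 : φ (Function.update u k (W x z y (1 / 2))) k x = 0 := by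
      apply h.not_pos hu3
      intro hp
      refine n3 _ half fun w => ?_
      rcases t.cover w with rfl | rfl | rfl
      · exact hp
      · rw [← b2]; exact hky
      · exact hz3
    have E3 : φ (Function.update u k (W z y x (1 / 2)))
        = φ (Function.update u k (W x z y (1 / 2))) := by
      apply h.nb2 hu k (W_noTies t1 half) (W_noTies t3 half)
      rw [← E1]
      ext w
      rcases t.cover w with rfl | rfl | rfl <;> linarith
    have := h.down hu3 hik t3 (by rwa [ui]) (by rwa [ui]) (by rw [uk]; exact W_ab t3 half)
      (by rw [uk]; exact W_bc t3 half) (by rw [← E3, ← E1]; exact hf)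
    linarith
  -- Otherwise `k` holds `x` and `y`, and `i` holds all of `z`, which `k` would buy when its rate
  -- is above that of `i`.
  · have hmi := mu_mem hi1 hi2
    obtain ⟨m, hm1, hm2⟩ := exists_between hmi.2
    have hm : m ∈ Set.Ioo (0 : ℝ) 1 := ⟨hmi.1.trans hm1, hm2⟩
    have hu' := upd_noTies hu k (W_noTies t3 hm)
    have Ec := h.const hu k t3 n3 half hm
    have hz3' := h.not_pos hu3 hz3
    rw [Ec] at b2 hz3' R3
    have a2 : φ (Function.update u k (W x z y m)) j z = 0 := h.not_pos hu' fun hp =>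
      h.swap hu' hjk (x := y) (y := z) (by rwa [uj]) (by rw [uk]; exact W_bc t3 hm) hp
        (by rw [← b2]; exact hky)
    have c := h.col hu' z T
    refine h.mid hu' hik.symm t3 (by rw [uk]; exact W_ab t3 hm) (by rw [uk]; exact W_bc t3 hm)
      (by rwa [ui]) (by rwa [ui]) (by rw [ui, uk, mu_W t3]; exact hm1) ?_ ?_ ?_
    · linarith
    · linarith
    · linarith

/-- When `i` has full support, no other agent does. -/
theorem Good.zero_of_full (h : Good φ) {u : Fin 3 → Fin 3 → ℝ} (hu : NoTiesProfile u)
    {i j : Fin 3} (hij : i ≠ j) (hf : Full (φ u i)) : ∃ x, φ u j x = 0 := by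
  by_contra hcon
  push Not at hcon
  have hfj : Full (φ u j) := fun x => lt_of_le_of_ne (h.nn hu j x) (hcon x).symm
  have agree : ∀ x y, u i y < u i x → u j y < u j x := by
    intro x y hxy
    rcases lt_trichotomy (u j x) (u j y) with h1 | h1 | h1
    · exact (h.swap hu hij hxy h1 (hf y) (hfj x)).elim
    · refine absurd h1 (hu j x y ?_)
      rintro rfl; exact lt_irrefl _ hxy
    · exact h1
  have main : ∀ a b c, Tri a b c → u i b < u i a → u i c < u i b → False :=
    fun a b c t h1 h2 => hcon b (h.down hu hij t h1 h2 (agree _ _ h1) (agree _ _ h2) hf)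
  have h01 := hu i 0 1 (by decide)
  have h02 := hu i 0 2 (by decide)
  have h12 := hu i 1 2 (by decide)
  rcases lt_or_gt_of_ne h01 with a | a <;> rcases lt_or_gt_of_ne h02 with b | b <;>
    rcases lt_or_gt_of_ne h12 with c | c
  · exact main 2 1 0 (by unfold Tri; decide) c a
  · exact main 1 2 0 (by unfold Tri; decide) c b
  · linarith
  · exact main 1 0 2 (by unfold Tri; decide) a b
  · exact main 2 0 1 (by unfold Tri; decide) b a
  · linarith
  · exact main 0 2 1 (by unfold Tri; decide) b c
  · exact main 0 1 2 (by unfold Tri; decide) a c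

/-- The support of `j` is `x, y` and that of `k` is `y, z`; here the objects that `j` and `k` do
not receive are already their worst ones. -/
theorem Good.core (h : Good φ) {u : Fin 3 → Fin 3 → ℝ} (hu : NoTiesProfile u) {i j k : Fin 3}
    (T : Tri i j k) {x y z : Fin 3} (t : Tri x y z) (hf : Full (φ u i)) (hjz : φ u j z = 0)
    (hkx : φ u k x = 0) (hj1 : u j z < u j x) (hj2 : u j z < u j y) (hk1 : u k x < u k y)
    (hk2 : u k x < u k z) : False := by
  have Cx := h.col hu x T
  have Cy := h.col hu y T
  have Cz := h.col hu z T
  have Ri := h.row hu i t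
  have Rj := h.row hu j t
  have Rk := h.row hu k t
  have jx : 0 < φ u j x := by linarith [hf y, hf z]
  have jy : 0 < φ u j y := by linarith [hf x]
  have ky : 0 < φ u k y := by linarith [hf z]
  have kz : 0 < φ u k z := by linarith [hf y, hf x]
  have hxy := hu i x y t.1
  have hxz := hu i x z t.2.1
  have hyz := hu i y z t.2.2
  have gxy : u i x < u i y → u j x < u j y := fun hl => by
    by_contra hcon
    have := lt_of_le_of_ne (not_lt.1 hcon) (hu j x y t.1).symm
    exact h.swap hu T.1 hl this (hf x) jy
  have gyx : u i y < u i x → u j y < u j x := fun hl => by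
    by_contra hcon
    have := lt_of_le_of_ne (not_lt.1 hcon) (hu j x y t.1)
    exact h.swap hu T.1 hl this (hf y) jx
  have gyz : u i y < u i z → u k y < u k z := fun hl => by
    by_contra hcon
    have := lt_of_le_of_ne (not_lt.1 hcon) (hu k y z t.2.2).symm
    exact h.swap hu T.2.1 hl this (hf y) kz
  have gzy : u i z < u i y → u k z < u k y := fun hl => by
    by_contra hcon
    have := lt_of_le_of_ne (not_lt.1 hcon) (hu k y z t.2.2)
    exact h.swap hu T.2.1 hl this (hf z) ky
  have t1 : Tri z y x := ⟨t.2.2.symm, t.2.1.symm, t.1.symm⟩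
  have tyxz : Tri y x z := ⟨t.1.symm, t.2.2, t.2.1⟩
  have tyzx : Tri y z x := ⟨t.2.2, t.1.symm, t.2.1.symm⟩
  rcases lt_or_gt_of_ne hxy with a | a <;> rcases lt_or_gt_of_ne hyz with b | b
  · exact ky.ne' (h.down hu T.2.1 t1 b a (gyz b) hk1 hf)
  · rcases lt_or_gt_of_ne hxz with c | c
    · exact kz.ne' (h.down hu T.2.1 tyzx b c (gzy b) hk2 hf)
    · exact jx.ne' (h.down hu T.1 tyxz a c (gxy a) hj1 hf)
  · rcases lt_or_gt_of_ne hxz with c | c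
    · exact h.caseC hu ⟨T.2.1, T.1, T.2.2.symm⟩ t1 c a (gyz b) hk1 (gyx a) hj2 hf hkx hjz
    · exact h.caseC hu T t c b (gyx a) hj2 (gyz b) hk1 hf hjz hkx
  · exact jy.ne' (h.down hu T.1 t a b (gyx a) hj2 hf)

theorem exists_lower {u : Fin 3 → ℝ} (hu : NoTies u) {x y z : Fin 3} (t : Tri x y z) :
    ∃ v : Fin 3 → ℝ, NoTies v ∧ v x = u x ∧ v y = u y ∧ v z < u z ∧ v z < v x ∧ v z < v y := by
  have hne := hu x y t.1
  let v := Function.update u z (min (u z) (min (u x) (u y)) - 1)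
  have vx : v x = u x := Function.update_of_ne t.2.1 _ _
  have vy : v y = u y := Function.update_of_ne t.2.2 _ _
  have vz : v z = min (u z) (min (u x) (u y)) - 1 := Function.update_self _ _ _
  have m1 : min (u z) (min (u x) (u y)) ≤ u z := min_le_left _ _
  have m2 : min (u z) (min (u x) (u y)) ≤ u x := (min_le_right _ _).trans (min_le_left _ _)
  have m3 : min (u z) (min (u x) (u y)) ≤ u y := (min_le_right _ _).trans (min_le_right _ _)
  refine ⟨v, ?_, vx, vy, by linarith, by linarith, by linarith⟩
  rcases lt_or_gt_of_ne hne with a | a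
  · exact noTies_of_order (a := y) (b := x) (c := z) ⟨t.1.symm, t.2.2, t.2.1⟩ (by linarith)
      (by linarith)
  · exact noTies_of_order t (by linarith) (by linarith)

theorem Good.not_full (h : Good φ) {u : Fin 3 → Fin 3 → ℝ} (hu : NoTiesProfile u) (i : Fin 3) :
    ¬ Full (φ u i) := by
  intro hf
  obtain ⟨j, hij⟩ : ∃ j, i ≠ j := by clear hf; revert i; decide
  obtain ⟨k, T⟩ := exists_third hij
  obtain ⟨z, hz⟩ := h.zero_of_full hu hij hf
  obtain ⟨x, hx⟩ := h.zero_of_full hu T.2.1 hf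
  have hxz : x ≠ z := by
    rintro rfl
    obtain ⟨y, hy⟩ : ∃ y, x ≠ y := by clear hz hx; revert x; decide
    obtain ⟨w, t⟩ := exists_third hy
    have := h.col hu x T
    have := h.row hu i t
    linarith [hf y, hf w]
  obtain ⟨y, s⟩ := exists_third hxz
  have t : Tri x y z := ⟨s.2.1, s.1, s.2.2.symm⟩
  have t' : Tri y z x := ⟨t.2.2, t.1.symm, t.2.1.symm⟩
  obtain ⟨v, hv, vx, vy, vz, v1, v2⟩ := exists_lower (hu j) t
  have e1 := h.push hu j t hz hv vx vy vz
  have hu1 := upd_noTies hu j hv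
  have hkj : Function.update u j v k = u k := Function.update_of_ne T.2.2.symm _ _
  obtain ⟨w, hw, wy, wz, wx, w1, w2⟩ := exists_lower (hu1 k) t'
  have e2 := h.push hu1 k t' (by rw [e1]; exact hx) hw wy wz wx
  have hu2 := upd_noTies hu1 k hw
  have e := e2.trans e1
  have gj : Function.update (Function.update u j v) k w j = v := by
    rw [Function.update_of_ne T.2.2, Function.update_self]
  have gk : Function.update (Function.update u j v) k w k = w := Function.update_self _ _ _
  exact h.core hu2 T t (by rw [e]; exact hf) (by rw [e]; exact hz) (by rw [e]; exact hx)
    (by rw [gj]; exact v1) (by rw [gj]; exact v2) (by rw [gk]; exact w1) (by rw [gk]; exact w2)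

/-! ### Ordinality -/

theorem exists_order {v : Fin 3 → ℝ} (hv : NoTies v) :
    ∃ a b c, Tri a b c ∧ v b < v a ∧ v c < v b := by
  have h01 := hv 0 1 (by decide)
  have h02 := hv 0 2 (by decide)
  have h12 := hv 1 2 (by decide)
  rcases lt_or_gt_of_ne h01 with a | a <;> rcases lt_or_gt_of_ne h02 with b | b <;>
    rcases lt_or_gt_of_ne h12 with c | c
  · exact ⟨2, 1, 0, by unfold Tri; decide, c, a⟩
  · exact ⟨1, 2, 0, by unfold Tri; decide, c, b⟩
  · linarith
  · exact ⟨1, 0, 2, by unfold Tri; decide, a, b⟩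
  · exact ⟨2, 0, 1, by unfold Tri; decide, b, a⟩
  · linarith
  · exact ⟨0, 2, 1, by unfold Tri; decide, b, c⟩
  · exact ⟨0, 1, 2, by unfold Tri; decide, a, c⟩

theorem Good.step (h : Good φ) {u : Fin 3 → Fin 3 → ℝ} (hu : NoTiesProfile u) (i : Fin 3)
    {v : Fin 3 → ℝ} (hv : NoTies v) (hs : SameOrder (u i) v) :
    φ u = φ (Function.update u i v) := by
  obtain ⟨a, b, c, t, h1, h2⟩ := exists_order (hu i)
  have h3 : v b < v a := (hs a b).1 h1
  have h4 : v c < v b := (hs b c).1 h2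
  have e := h.canon (upd_noTies hu i hv) i t (by simpa using h3) (by simpa using h4)
  simp only [Function.update_idem, Function.update_self] at e
  rw [e, h.canon hu i t h1 h2]
  exact h.const hu i t (fun m hm => h.not_full (upd_noTies hu i (W_noTies t hm)) i)
    (mu_mem h1 h2) (mu_mem h3 h4)

end

theorem stmt12 (φ : (Fin 3 → Fin 3 → ℝ) → Fin 3 → Fin 3 → ℝ)
    (hB : BistochasticValued φ) (hC : NCContinuous φ) (hE : Efficient φ)
    (hSP : StrategyProof φ) (hNB : NonBossy φ) :
    ∀ u u' : Fin 3 → Fin 3 → ℝ, NoTiesProfile u → NoTiesProfile u' →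
      (∀ k, SameOrder (u k) (u' k)) → φ u = φ u' := by
  have h : Good φ := ⟨hB, hC, hE, hSP, hNB⟩
  intro u u' hu hu' hs
  have hu0 := upd_noTies hu 0 (hu' 0)
  have hu1 := upd_noTies hu0 1 (hu' 1)
  rw [h.step hu 0 (hu' 0) (hs 0), h.step hu0 1 (hu' 1) (by simpa using hs 1),
    h.step hu1 2 (hu' 2) (by simpa using hs 2)]
  congr 1
  ext l x
  fin_cases l <;> simp [Function.update]
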